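/- Let k be a field and S = k[x₁,…,xₙ]. If 𝓘 is an infinite collection of artinian monomial ideals of S, then 𝓘 contains an infinite strictly descending chain: there is a sequence I₁ ⊋ I₂ ⊋ I₃ ⊋ ⋯ of ideals all belonging to 𝓘. -/

import Mathlib

/-- An ideal of `k[x₁,…,xₙ]` is a *monomial ideal* if it is generated by a set of
monomials `x^u` with `u ∈ ℕⁿ`. -/
def IsMonomialIdeal {k : Type*} [Field k] {n : ℕ}
    (I : Ideal (MvPolynomial (Fin n) k)) : Prop :=
  ∃ U : Set (Fin n →₀ ℕ),
    I = Ideal.span ((fun u => MvPolynomial.monomial u (1 : k)) '' U)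

/-!
A monomial ideal is determined by the upper set of exponents of its monomials, and `UpperSet` is
ordered by reverse inclusion. So it suffices that `UpperSet (σ →₀ ℕ)` is well-quasi-ordered: an
infinite family in a well-quasi-order contains a strictly increasing sequence. The
well-quasi-ordering is proved by induction on the number of variables. An upper set of `ℕ × α` is
a sequence of upper sets of `α`, its slices, which grow and hence, by well-foundedness, stabilize.
Higman's lemma compares the initial parts of two such sequences, and the hypothesis on `α` their
limits.
-/

section WellQuasiOrder

theorem wellQuasiOrderedLE_of_map_le_map_imp {α β : Type*} [LE α] [LE β] [WellQuasiOrderedLE β]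
    (f : α → β) (hf : ∀ a b, f a ≤ f b → a ≤ b) : WellQuasiOrderedLE α where
  wqo a :=
    let ⟨m, n, hmn, hle⟩ := wellQuasiOrdered_le (f ∘ a)
    ⟨m, n, hmn, hf _ _ hle⟩

theorem exists_strictAnti_of_partiallyWellOrderedOn_ge {α : Type*} [PartialOrder α] {s : Set α}
    (hs : s.PartiallyWellOrderedOn (· ≥ ·)) (hinf : s.Infinite) :
    ∃ f : ℕ → α, (∀ m, f m ∈ s) ∧ StrictAnti f := by
  let e := hinf.natEmbedding
  obtain ⟨φ, hφ⟩ := hs.exists_monotone_subseq fun m => (e m).2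
  have hinj : Function.Injective fun m => (e (φ m) : α) :=
    Subtype.val_injective.comp (e.injective.comp φ.injective)
  have hanti : Antitone fun m => (e (φ m) : α) := fun m n hmn => hφ m n hmn
  exact ⟨_, fun m => (e (φ m)).2, hanti.strictAnti_of_injective hinj⟩

theorem wellQuasiOrdered_sublistForall₂_le (α : Type*) [Preorder α] [WellQuasiOrderedLE α] :
    WellQuasiOrdered (List.SublistForall₂ (α := α) (β := α) (· ≤ ·)) := by
  simpa only [Set.mem_univ, implies_true, Set.ofPred_true,
    Set.partiallyWellOrderedOn_univ_iff] using
    Set.PartiallyWellOrderedOn.partiallyWellOrderedOn_sublistForall₂ (· ≤ ·)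
      (Set.isPWO_of_wellQuasiOrderedLE (Set.univ : Set α))

end WellQuasiOrder

section AntitoneSequences

theorem le_of_sublistForall₂_map_range {α : Type*} [Preorder α] {f g : ℕ → α} (hg : Antitone g)
    {M N : ℕ}
    (h : List.SublistForall₂ (· ≤ ·) ((List.range M).map f) ((List.range N).map g))
    {i : ℕ} (hi : i < M) : f i ≤ g i := by
  rw [List.sublistForall₂_map_left_iff, List.sublistForall₂_map_right_iff,
    List.sublistForall₂_iff] at h
  obtain ⟨l, hl, hsub⟩ := h
  obtain ⟨e, he⟩ := List.sublist_iff_exists_orderEmbedding_getElem?_eq.1 hsub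
  have hil : i < l.length := by simpa [← hl.length_eq] using hi
  have hle : f i ≤ g l[i] := by simpa using hl.get (by simpa using hi) hil
  have hei : l[i] = e i := by
    have := he i
    grind
  calc f i ≤ g (e i) := hei ▸ hle
    _ ≤ g i := hg e.strictMono.le_apply

instance wellQuasiOrderedLE_antitone {α : Type*} [PartialOrder α] [WellQuasiOrderedLE α] :
    WellQuasiOrderedLE {f : ℕ → α // Antitone f} where
  wqo F := by
    choose N hN using fun m => WellFoundedLT.antitone_chain_condition (F m).2
    have : IsPreorder (List α) (List.SublistForall₂ (· ≤ ·)) :=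
      { refl := refl_of _, trans := fun _ _ _ => trans_of _ }
    obtain ⟨m, n, hmn, hinit, hlim⟩ :=
      (wellQuasiOrdered_sublistForall₂_le α).prod (wellQuasiOrdered_le (α := α))
        fun m => ((List.range (N m)).map (F m).1, (F m).1 (N m))
    refine ⟨m, n, hmn, fun i => ?_⟩
    obtain hi | hi := lt_or_ge i (N m)
    · exact le_of_sublistForall₂_map_range (F n).2 hinit hi
    · calc (F m).1 i = (F m).1 (N m) := (hN m i hi).symm
        _ ≤ (F n).1 (N n) := hlim
        _ = (F n).1 (max i (N n)) := hN n _ (le_max_right _ _)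
        _ ≤ (F n).1 i := (F n).2 (le_max_left _ _)

end AntitoneSequences

section UpperSets

theorem wellQuasiOrderedLE_upperSet_of_surjective {α β : Type*} [Preorder α] [Preorder β]
    [WellQuasiOrderedLE (UpperSet α)] {f : α → β} (hf : Monotone f)
    (hsurj : Function.Surjective f) : WellQuasiOrderedLE (UpperSet β) :=
  wellQuasiOrderedLE_of_map_le_map_imp (fun S => (⟨f ⁻¹' S, S.upper.preimage hf⟩ : UpperSet α))
    fun _ _ h => hsurj.preimage_subset_preimage_iff.1 h

/-- The slice of an upper set of a product at a first coordinate `i`, as an upper set of the second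
factor. -/
def upperSetSlice {α β : Type*} [Preorder α] [Preorder β] (S : UpperSet (α × β)) (i : α) :
    UpperSet β :=
  ⟨Prod.mk i ⁻¹' S, S.upper.preimage fun _ _ h => Prod.mk_le_mk.2 ⟨le_refl i, h⟩⟩

theorem antitone_upperSetSlice {α β : Type*} [Preorder α] [Preorder β] (S : UpperSet (α × β)) :
    Antitone (upperSetSlice S) :=
  fun _ _ hij b hb => S.upper (Prod.mk_le_mk.2 ⟨hij, le_refl b⟩) hb

instance wellQuasiOrderedLE_upperSet_nat_prod {α : Type*} [Preorder α]
    [WellQuasiOrderedLE (UpperSet α)] : WellQuasiOrderedLE (UpperSet (ℕ × α)) :=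
  wellQuasiOrderedLE_of_map_le_map_imp
    (fun S => (⟨upperSetSlice S, antitone_upperSetSlice S⟩ :
      {f : ℕ → UpperSet α // Antitone f}))
    fun S T h x hx =>
      have hslice : ∀ i, upperSetSlice S i ≤ upperSetSlice T i := h
      hslice x.1 hx

instance wellQuasiOrderedLE_upperSet_fin_nat (n : ℕ) :
    WellQuasiOrderedLE (UpperSet (Fin n → ℕ)) := by
  induction n with
  | zero =>
    have : Finite (UpperSet (Fin 0 → ℕ)) := .of_injective _ SetLike.coe_injective
    exact Finite.to_wellQuasiOrderedLE
  | succ n _ =>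
    let e := Fin.consOrderIso fun _ : Fin (n + 1) => ℕ
    exact wellQuasiOrderedLE_upperSet_of_surjective e.monotone e.surjective

instance wellQuasiOrderedLE_upperSet_finsupp_nat (σ : Type*) [Finite σ] :
    WellQuasiOrderedLE (UpperSet (σ →₀ ℕ)) := by
  obtain ⟨n, ⟨e⟩⟩ := Finite.exists_equiv_fin σ
  let f : (Fin n → ℕ) → σ →₀ ℕ := fun u => Finsupp.equivFunOnFinite.symm (u ∘ e)
  have hf : Monotone f := fun _ _ h i => h (e i)
  have hsurj : Function.Surjective f :=
    Finsupp.equivFunOnFinite.symm.surjective.comp e.injective.surjective_comp_right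
  exact wellQuasiOrderedLE_upperSet_of_surjective hf hsurj

end UpperSets

section MonomialIdeals

open MvPolynomial

variable {σ R : Type*} [CommSemiring R]

theorem span_monomial_image_le_of_upperClosure_le {U V : Set (σ →₀ ℕ)}
    (h : upperClosure U ≤ upperClosure V) :
    Ideal.span ((fun u => monomial u (1 : R)) '' V) ≤
      Ideal.span ((fun u => monomial u (1 : R)) '' U) := by
  rw [Ideal.span_le]
  rintro _ ⟨v, hv, rfl⟩
  obtain ⟨u, hu, huv⟩ : ∃ u ∈ U, u ≤ v := h (subset_upperClosure hv)
  refine mem_ideal_span_monomial_image.2 fun w hw => ⟨u, hu, ?_⟩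
  rwa [Finset.mem_singleton.1 (support_monomial_subset hw)]

/-- **Maclagan's theorem**, usually stated as the finiteness of antichains of monomial ideals. -/
theorem partiallyWellOrderedOn_ge_range_span_monomial [Finite σ] :
    (Set.range fun U : Set (σ →₀ ℕ) =>
      Ideal.span ((fun u => monomial u (1 : R)) '' U)).PartiallyWellOrderedOn (· ≥ ·) := by
  intro I
  choose U hU using fun m => (I m).2
  obtain ⟨m, n, hmn, hle⟩ := wellQuasiOrdered_le fun m => upperClosure (U m)
  refine ⟨m, n, hmn, ?_⟩
  change (I n : Ideal (MvPolynomial σ R)) ≤ I m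
  rw [← hU m, ← hU n]
  exact span_monomial_image_le_of_upperClosure_le hle

theorem artinian_monomialIdeals_infinite_descending_chain_general [Finite σ]
    (𝓘 : Set (Ideal (MvPolynomial σ R)))
    (hmono : ∀ I ∈ 𝓘, ∃ U : Set (σ →₀ ℕ), I = Ideal.span ((fun u => monomial u (1 : R)) '' U))
    (hinf : 𝓘.Infinite) :
    ∃ f : ℕ → Ideal (MvPolynomial σ R), (∀ m : ℕ, f m ∈ 𝓘) ∧ ∀ m : ℕ, f (m + 1) < f m := by
  have hpwo : 𝓘.PartiallyWellOrderedOn (· ≥ ·) :=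
    partiallyWellOrderedOn_ge_range_span_monomial.mono fun I hI =>
      (hmono I hI).imp fun _ hU => hU.symm
  obtain ⟨f, hf, hanti⟩ := exists_strictAnti_of_partiallyWellOrderedOn_ge hpwo hinf
  exact ⟨f, hf, fun m => hanti m.lt_succ_self⟩

end MonomialIdeals

/-- **Infinite descending chains in infinite families of artinian monomial
ideals.**  If `𝓘` is an infinite collection of artinian monomial ideals of
`k[x₁,…,xₙ]` (monomial ideals `I` with `S/I` finite-dimensional over `k`), then
`𝓘` contains an infinite strictly descending chain `I₁ ⊋ I₂ ⊋ I₃ ⊋ ⋯`. -/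
theorem artinian_monomialIdeals_infinite_descending_chain {k : Type*} [Field k]
    {n : ℕ} (𝓘 : Set (Ideal (MvPolynomial (Fin n) k)))
    (hmono : ∀ I ∈ 𝓘, IsMonomialIdeal I)
    (hart : ∀ I ∈ 𝓘, Module.Finite k (MvPolynomial (Fin n) k ⧸ I))
    (hinf : 𝓘.Infinite) :
    ∃ f : ℕ → Ideal (MvPolynomial (Fin n) k),
      (∀ m : ℕ, f m ∈ 𝓘) ∧ ∀ m : ℕ, f (m + 1) < f m :=
  artinian_monomialIdeals_infinite_descending_chain_general 𝓘 hmono hinf
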